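/- Let m ≥ 1, n ≥ 1, and k ≥ 0 be integers with 2^{m+1}·n + k ≥ 5. Set X = S(2^{m+1}·n + k + 2^m, 5) and Y = S(2^{m+1}·n + k, 5). If ν₂(X) ≥ m − 1 and ν₂(Y) ≥ m − 1, then exactly one of ν₂(X), ν₂(Y) equals m − 1, and the other is at least m. -/

import Mathlib

/-- Stirling numbers of the second kind, via the recurrence
`S(n+1,k+1) = S(n,k) + (k+1)·S(n,k+1)`. -/
def stirling2 : ℕ → ℕ → ℕ
  | 0, 0 => 1
  | 0, _ + 1 => 0
  | _ + 1, 0 => 0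
  | n + 1, k + 1 => stirling2 n k + (k + 1) * stirling2 n (k + 1)

/-! The explicit formula `k! S(n,k) = ∑ i, (-1)^(k-i) C(k,i) i^n` says that `k! S(n,k)` is the
`k`-th forward difference of `x ↦ x^n` at `0`. For `k = 5` and `h = 2^(m+1)` it turns
`120 (S(N+h,5) - S(N,5))` into a combination of the increments `a^(N+h) - a^N` with `a ≤ 5`.
Modulo `2^(m+4)` only `a = 5` contributes: the terms with even `a` vanish for `N ≥ m + 3`, and
`3^h - 1` is divisible by `2^(m+3)` and is multiplied by the even coefficient `10`, whereas
`5^h - 1` is an odd multiple of `2^(m+3)`. Dividing by `120 = 8 · 15` gives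
`S(N+h,5) ≡ S(N,5) + 2^m` modulo `2^(m+1)`. -/

open fwdDiff
open scoped Nat

section StirlingSecond

theorem stirling2_eq_stirlingSecond : ∀ n k : ℕ, stirling2 n k = Nat.stirlingSecond n k
  | 0, 0 | 0, _ + 1 | _ + 1, 0 => by simp [stirling2]
  | n + 1, k + 1 => by
    rw [stirling2, Nat.stirlingSecond_succ_succ, stirling2_eq_stirlingSecond n k,
      stirling2_eq_stirlingSecond n (k + 1), add_comm]

theorem stirlingSecond_pos {n k : ℕ} (hk : 0 < k) (hkn : k ≤ n) :
    0 < Nat.stirlingSecond n k := by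
  induction n, hkn using Nat.le_induction with
  | base => simp [Nat.stirlingSecond_self]
  | succ n _ ih =>
    rw [Nat.stirlingSecond_succ_left n k hk.ne']
    exact Nat.add_pos_left (Nat.mul_pos hk ih) _

theorem fwdDiff_iter_succ_id_mul {R : Type*} [CommRing R] (f : R → R) (k : ℕ) (x : R) :
    Δ_[1] ^[k + 1] (fun y ↦ y * f y) x =
      x * Δ_[1] ^[k + 1] f x + (k + 1) * Δ_[1] ^[k] f (x + 1) := by
  induction k generalizing x with
  | zero =>
    simp only [zero_add, Function.iterate_one, Function.iterate_zero, id_eq, fwdDiff,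
      Nat.cast_zero]
    ring
  | succ k ih =>
    rw [Function.iterate_succ_apply', fwdDiff, ih, ih, Function.iterate_succ_apply' _ (k + 1) f,
      fwdDiff, Function.iterate_succ_apply' _ k f, fwdDiff, fwdDiff]
    push_cast
    ring

theorem fwdDiff_iter_pow_zero (R : Type*) [CommRing R] (n k : ℕ) :
    Δ_[1] ^[k] (fun x : R ↦ x ^ n) 0 = k ! * Nat.stirlingSecond n k := by
  induction n generalizing k with
  | zero =>
    cases k with
    | zero => simp
    | succ k =>
      rw [fwdDiff_iter_pow_eq_zero_of_lt k.succ_pos]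
      simp
  | succ n ih =>
    cases k with
    | zero => simp
    | succ k =>
      have shift : Δ_[1] ^[k] (fun x : R ↦ x ^ n) (0 + 1) =
          Δ_[1] ^[k + 1] (fun x ↦ x ^ n) 0 + Δ_[1] ^[k] (fun x ↦ x ^ n) 0 := by
        rw [Function.iterate_succ_apply', fwdDiff, sub_add_cancel]
      simp only [pow_succ', fwdDiff_iter_succ_id_mul, shift, ih, Nat.stirlingSecond_succ_succ,
        Nat.factorial_succ]
      push_cast
      ring

theorem factorial_mul_stirlingSecond (n k : ℕ) :
    (k ! * Nat.stirlingSecond n k : ℤ) =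
      ∑ i ∈ Finset.range (k + 1), (-1) ^ (k - i) * (k.choose i) * (i : ℤ) ^ n := by
  rw [← fwdDiff_iter_pow_zero, fwdDiff_iter_eq_sum_shift]
  simp

theorem mul_stirlingSecond_five {n : ℕ} (hn : n ≠ 0) :
    (120 * Nat.stirlingSecond n 5 : ℤ) = 5 ^ n - 5 * 4 ^ n + 10 * 3 ^ n - 10 * 2 ^ n + 5 := by
  calc (120 * Nat.stirlingSecond n 5 : ℤ)
    _ = ∑ i ∈ Finset.range 6, (-1) ^ (5 - i) * (Nat.choose 5 i) * (i : ℤ) ^ n :=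
      factorial_mul_stirlingSecond n 5
    _ = 5 - 10 * 2 ^ n + 10 * 3 ^ n - 5 * 4 ^ n + 5 ^ n := by
      simp [Finset.sum_range_succ, Nat.choose, hn, sub_eq_add_neg]
    _ = 5 ^ n - 5 * 4 ^ n + 10 * 3 ^ n - 10 * 2 ^ n + 5 := by ring

end StirlingSecond

section PowersOfTwo

theorem one_add_two_pow_pow_two_pow_modEq {i : ℕ} (hi : 2 ≤ i) (n : ℕ) :
    (1 + 2 ^ i) ^ 2 ^ n ≡ 1 + 2 ^ (n + i) [ZMOD 2 ^ (n + i + 1)] := by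
  have hdvd : ((2 : ℕ) : ℤ) * 2 ^ i * 2 ∣ (2 ^ i) ^ 2 := by
    rw [← pow_mul, Nat.cast_ofNat, ← pow_succ', ← pow_succ]
    exact pow_dvd_pow 2 (by lia)
  obtain ⟨y, hy⟩ := ZMod.exists_one_add_mul_pow_prime_pow_eq Nat.prime_two
    (dvd_pow_self (2 : ℤ) (by lia)) hdvd 1 n
  refine (Int.modEq_iff_add_fac.2 ⟨y, ?_⟩).symm
  rw [mul_one] at hy
  rw [hy]
  push_cast
  ring

theorem odd_mul_two_pow_modEq {a b : ℤ} (ha : Odd a) (hb : Odd b) (i : ℕ) :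
    a * 2 ^ i ≡ b * 2 ^ i [ZMOD 2 ^ (i + 1)] := by
  rw [pow_succ']
  exact Int.ModEq.mul_right' ((Int.odd_iff.1 ha).trans (Int.odd_iff.1 hb).symm)

theorem ten_mul_two_pow_modEq_zero {m n : ℕ} (h : m ≤ n) : 10 * 2 ^ n ≡ 0 [ZMOD 2 ^ (m + 1)] :=
  Int.modEq_zero_iff_dvd.2 <| (pow_dvd_pow 2 (Nat.add_le_add_right h 1)).trans ⟨5, by ring⟩

theorem four_pow_modEq_zero {m n : ℕ} (h : m ≤ 2 * n) : 4 ^ n ≡ 0 [ZMOD 2 ^ m] := by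
  rw [show (4 : ℤ) = 2 ^ 2 by norm_num, ← pow_mul]
  exact Int.modEq_zero_iff_dvd.2 (pow_dvd_pow 2 h)

theorem five_pow_add_two_pow_modEq (N m : ℕ) :
    (5 : ℤ) ^ (N + 2 ^ (m + 1)) ≡ 5 ^ N + 120 * 2 ^ m [ZMOD 2 ^ (m + 4)] := by
  have hodd : 5 ^ N * 2 ^ (m + 3) ≡ 15 * 2 ^ (m + 3) [ZMOD 2 ^ (m + 4)] :=
    odd_mul_two_pow_modEq (Odd.pow (by decide)) (by decide) (m + 3)
  calc (5 : ℤ) ^ (N + 2 ^ (m + 1))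
    _ = 5 ^ N * (1 + 2 ^ 2) ^ 2 ^ (m + 1) := by rw [pow_add]; norm_num
    _ ≡ 5 ^ N * (1 + 2 ^ (m + 3)) [ZMOD 2 ^ (m + 4)] :=
      (one_add_two_pow_pow_two_pow_modEq le_rfl (m + 1)).mul_left _
    _ = 5 ^ N + 5 ^ N * 2 ^ (m + 3) := by ring
    _ ≡ 5 ^ N + 15 * 2 ^ (m + 3) [ZMOD 2 ^ (m + 4)] := hodd.add_left _
    _ = 5 ^ N + 120 * 2 ^ m := by ring

theorem three_pow_add_two_pow_modEq (N m : ℕ) :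
    (3 : ℤ) ^ (N + 2 ^ (m + 1)) ≡ 3 ^ N [ZMOD 2 ^ (m + 3)] := by
  calc (3 : ℤ) ^ (N + 2 ^ (m + 1))
    _ = 3 ^ N * (1 + 2 ^ 3) ^ 2 ^ m := by rw [pow_add, pow_succ' 2 m, pow_mul]; norm_num
    _ ≡ 3 ^ N * (1 + 2 ^ (m + 3)) [ZMOD 2 ^ (m + 3)] :=
      ((one_add_two_pow_pow_two_pow_modEq (by lia) m).of_dvd (pow_dvd_pow 2 (by lia))).mul_left _
    _ = 3 ^ N + 2 ^ (m + 3) * 3 ^ N := by ring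
    _ ≡ 3 ^ N [ZMOD 2 ^ (m + 3)] := Int.modEq_add_fac_self

end PowersOfTwo

theorem stirlingSecond_five_add_two_pow_modEq {m N : ℕ} (hN : m + 3 ≤ N) :
    Nat.stirlingSecond (N + 2 ^ (m + 1)) 5 ≡ Nat.stirlingSecond N 5 + 2 ^ m [MOD 2 ^ (m + 1)] := by
  have hNh : m + 3 ≤ N + 2 ^ (m + 1) := Nat.le_add_right_of_le hN
  have two : 10 * 2 ^ (N + 2 ^ (m + 1)) ≡ 10 * 2 ^ N [ZMOD 2 ^ (m + 4)] :=
    (ten_mul_two_pow_modEq_zero hNh).trans (ten_mul_two_pow_modEq_zero hN).symm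
  have three : 10 * 3 ^ (N + 2 ^ (m + 1)) ≡ 10 * 3 ^ N [ZMOD 2 ^ (m + 4)] :=
    (three_pow_add_two_pow_modEq N m).mul_left' (c := 10) |>.of_dvd ⟨5, by ring⟩
  have four : 5 * 4 ^ (N + 2 ^ (m + 1)) ≡ 5 * 4 ^ N [ZMOD 2 ^ (m + 4)] :=
    ((four_pow_modEq_zero (by lia)).trans (four_pow_modEq_zero (by lia)).symm).mul_left 5
  have key : 120 * (Nat.stirlingSecond (N + 2 ^ (m + 1)) 5 : ℤ) ≡
      120 * (Nat.stirlingSecond N 5 + 2 ^ m) [ZMOD 2 ^ (m + 4)] := by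
    rw [mul_add, mul_stirlingSecond_five (by lia), mul_stirlingSecond_five (by lia)]
    calc (5 : ℤ) ^ (N + 2 ^ (m + 1)) - 5 * 4 ^ (N + 2 ^ (m + 1)) + 10 * 3 ^ (N + 2 ^ (m + 1))
          - 10 * 2 ^ (N + 2 ^ (m + 1)) + 5
      _ ≡ 5 ^ N + 120 * 2 ^ m - 5 * 4 ^ N + 10 * 3 ^ N - 10 * 2 ^ N + 5 [ZMOD 2 ^ (m + 4)] :=
        ((((five_pow_add_two_pow_modEq N m).sub four).add three).sub two).add_right 5
      _ = 5 ^ N - 5 * 4 ^ N + 10 * 3 ^ N - 10 * 2 ^ N + 5 + 120 * 2 ^ m := by ring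
  have cancel_eight : 15 * Nat.stirlingSecond (N + 2 ^ (m + 1)) 5 ≡
      15 * (Nat.stirlingSecond N 5 + 2 ^ m) [MOD 2 ^ (m + 1)] := by
    refine Nat.ModEq.mul_left_cancel' (c := 8) (by norm_num) (Int.natCast_modEq_iff.1 ?_)
    rw [← mul_assoc, ← mul_assoc, show 8 * 2 ^ (m + 1) = 2 ^ (m + 4) by ring]
    exact_mod_cast key
  exact cancel_eight.cancel_left_of_coprime (Nat.Coprime.pow_left _ (by norm_num))

section Valuation

variable {x y m : ℕ}

theorem two_pow_succ_dvd_iff_not_dvd (h : x ≡ y + 2 ^ m [MOD 2 ^ (m + 1)]) (hy : 2 ^ m ∣ y) :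
    2 ^ (m + 1) ∣ x ↔ ¬2 ^ (m + 1) ∣ y := by
  obtain ⟨b, rfl⟩ := hy
  rw [h.dvd_iff dvd_rfl, ← Nat.mul_succ, pow_succ, Nat.mul_dvd_mul_iff_left (by positivity),
    Nat.mul_dvd_mul_iff_left (by positivity), ← even_iff_two_dvd, ← even_iff_two_dvd,
    Nat.even_add_one]

theorem padicValNat_two_split_of_modEq (hx : x ≠ 0) (hy : y ≠ 0)
    (h : x ≡ y + 2 ^ m [MOD 2 ^ (m + 1)]) (hmy : m ≤ padicValNat 2 y) :
    (padicValNat 2 x = m ∧ m + 1 ≤ padicValNat 2 y) ∨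
      (padicValNat 2 y = m ∧ m + 1 ≤ padicValNat 2 x) := by
  have hdvdy : 2 ^ m ∣ y := (padicValNat_dvd_iff_le hy).2 hmy
  have hdvdx : 2 ^ m ∣ x :=
    (h.dvd_iff (pow_dvd_pow 2 m.le_succ)).2 (dvd_add hdvdy dvd_rfl)
  have hmx : m ≤ padicValNat 2 x := (padicValNat_dvd_iff_le hx).1 hdvdx
  have hsplit := two_pow_succ_dvd_iff_not_dvd h hdvdy
  rw [padicValNat_dvd_iff_le hx, padicValNat_dvd_iff_le hy] at hsplit
  lia

end Valuation

theorem stirling_five_splitting_general {m N : ℕ} (h5 : 5 ≤ N) (hN : m + 3 ≤ N)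
    (hY : m ≤ padicValNat 2 (Nat.stirlingSecond N 5)) :
    (padicValNat 2 (Nat.stirlingSecond (N + 2 ^ (m + 1)) 5) = m ∧
      m + 1 ≤ padicValNat 2 (Nat.stirlingSecond N 5)) ∨
    (padicValNat 2 (Nat.stirlingSecond N 5) = m ∧
      m + 1 ≤ padicValNat 2 (Nat.stirlingSecond (N + 2 ^ (m + 1)) 5)) :=
  padicValNat_two_split_of_modEq (stirlingSecond_pos (by lia) (by lia)).ne'
    (stirlingSecond_pos (by lia) h5).ne' (stirlingSecond_five_add_two_pow_modEq hN) hY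

/-- The splitting step: for m, n ≥ 1 and k ≥ 0 with 2^{m+1}n + k ≥ 5, if
X = S(2^{m+1}n + k + 2^m, 5) and Y = S(2^{m+1}n + k, 5) both have 2-adic valuation
at least m − 1, then exactly one of them has valuation m − 1 and the other has
valuation at least m. -/
theorem stirling_five_splitting (m n k : ℕ) (hm : 1 ≤ m) (hn : 1 ≤ n)
    (h5 : 5 ≤ 2 ^ (m + 1) * n + k)
    (hX : m - 1 ≤ padicValNat 2 (stirling2 (2 ^ (m + 1) * n + k + 2 ^ m) 5))
    (hY : m - 1 ≤ padicValNat 2 (stirling2 (2 ^ (m + 1) * n + k) 5)) :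
    (padicValNat 2 (stirling2 (2 ^ (m + 1) * n + k + 2 ^ m) 5) = m - 1 ∧
      m ≤ padicValNat 2 (stirling2 (2 ^ (m + 1) * n + k) 5)) ∨
    (padicValNat 2 (stirling2 (2 ^ (m + 1) * n + k) 5) = m - 1 ∧
      m ≤ padicValNat 2 (stirling2 (2 ^ (m + 1) * n + k + 2 ^ m) 5)) := by
  obtain ⟨m, rfl⟩ := Nat.exists_eq_add_of_le' hm
  have hN : m + 3 ≤ 2 ^ (m + 2) * n + k :=
    Nat.le_add_right_of_le (le_mul_of_le_of_one_le Nat.lt_two_pow_self hn)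
  simp only [stirling2_eq_stirlingSecond] at hY ⊢
  exact stirling_five_splitting_general h5 hN hY
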